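/- (Case II of the paper, outcome E1.) Fix β, r ∈ ℝ and define f : ℝ → ℝ → Matrix (Fin 2) (Fin 2) ℂ by f x1 x2 := (1/2) • (1 + (r·√(1 − β²/x1²)) • (sin x2 • σx − cos x2 • σz) + (β/x1) • (cos x2 • σx + sin x2 • σz)) (the post-measurement state ρ_f1 for outcome E1 when the probe Bloch vector is orthogonal to the measurement direction n̂(θ) = (cos θ, 0, sin θ), with parameters α = x1 and θ = x2). Let (x1, x2) satisfy 0 < β < x1, and let D1, D2 be the entrywise partial derivative matrices of f at (x1, x2). Then D1 * D2 = D2 * D1 if and only if r² = 1. -/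

import Mathlib

open Matrix

noncomputable def σx : Matrix (Fin 2) (Fin 2) ℂ := !![0, 1; 1, 0]
noncomputable def σy : Matrix (Fin 2) (Fin 2) ℂ := !![0, -Complex.I; Complex.I, 0]
noncomputable def σz : Matrix (Fin 2) (Fin 2) ℂ := !![1, 0; 0, -1]

/-- Entrywise partial derivative of a two-parameter family of matrices in the first
parameter, at `(x1, x2)`. -/
noncomputable def pderiv1 (f : ℝ → ℝ → Matrix (Fin 2) (Fin 2) ℂ) (x1 x2 : ℝ) :
    Matrix (Fin 2) (Fin 2) ℂ :=
  Matrix.of fun i j => deriv (fun t => f t x2 i j) x1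

/-- Entrywise partial derivative of a two-parameter family of matrices in the second
parameter, at `(x1, x2)`. -/
noncomputable def pderiv2 (f : ℝ → ℝ → Matrix (Fin 2) (Fin 2) ℂ) (x1 x2 : ℝ) :
    Matrix (Fin 2) (Fin 2) ℂ :=
  Matrix.of fun i j => deriv (fun t => f x1 t i j) x2

/-!
In the frame of Pauli combinations along `(cos θ, 0, sin θ)` and orthogonal to it, the state has
Bloch coordinates `q` and `p`, with `p` and `q` depending only on `α`. Rotating the frame exchanges
its two vectors up to sign, so `∂_α f = (p' τ + q' ν) / 2` and `∂_θ f = (p ν - q τ) / 2`. As `τ` and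
`ν` do not commute, these two derivatives commute exactly when `p p' + q q' = 0`, that is, when the
squared Bloch length `p² + q²` is stationary in `α`. Here `p² + q² = r² + (1 - r²) (β / α)²`.
-/

section PlaneCommutator

variable {R : Type*} [CommRing R]

theorem lie_smul_add_smul {L : Type*} [LieRing L] [LieAlgebra R L] (a b c d : R) (u v : L) :
    ⁅a • u + b • v, c • u + d • v⁆ = (a * d - b * c) • ⁅u, v⁆ := by
  simp only [add_lie, lie_add, smul_lie, lie_smul, lie_self, ← lie_skew u v]
  module

attribute [local instance] LieRing.ofAssociativeRing

theorem commute_smul_add_smul_iff [IsDomain R] {A : Type*} [Ring A] [Algebra R A]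
    [Module.IsTorsionFree R A] {u v : A} (huv : ¬ Commute u v) {a b c d : R} :
    Commute (a • u + b • v) (c • u + d • v) ↔ a * d = b * c := by
  rw [commute_iff_lie_eq] at huv ⊢
  rw [lie_smul_add_smul, smul_eq_zero_iff_left huv, sub_eq_zero]

end PlaneCommutator

/-- The Pauli matrix `ν(θ)` along the measurement direction `(cos θ, 0, sin θ)`. -/
noncomputable def radialPauli (θ : ℝ) : Matrix (Fin 2) (Fin 2) ℂ :=
  Real.cos θ • σx + Real.sin θ • σz

/-- The Pauli matrix `τ(θ)` orthogonal to the measurement direction within the `xz`-plane, with the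
sign chosen so that `ν' = -τ` and `τ' = ν`. -/
noncomputable def tangentialPauli (θ : ℝ) : Matrix (Fin 2) (Fin 2) ℂ :=
  Real.sin θ • σx - Real.cos θ • σz

/-- The qubit state whose Bloch vector lies in the `xz`-plane and has coordinates `p` and `q` in the
rotating frame `tangentialPauli θ`, `radialPauli θ`. Positivity, i.e. `p ^ 2 + q ^ 2 ≤ 1`, is not
imposed. -/
noncomputable def planarState (p q θ : ℝ) : Matrix (Fin 2) (Fin 2) ℂ :=
  (1 / 2 : ℝ) • (1 + p • tangentialPauli θ + q • radialPauli θ)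

theorem not_commute_σx_σz : ¬ Commute σx σz := by
  intro h
  have h01 := congrFun₂ h.eq 0 1
  norm_num [σx, σz] at h01

theorem not_commute_tangentialPauli_radialPauli (θ : ℝ) :
    ¬ Commute (tangentialPauli θ) (radialPauli θ) := by
  rw [tangentialPauli, radialPauli, sub_eq_add_neg, ← neg_smul,
    commute_smul_add_smul_iff not_commute_σx_σz]
  intro h
  linarith [Real.sin_sq_add_cos_sq θ]

theorem hasDerivAt_radialPauli_apply (θ : ℝ) (i j : Fin 2) :
    HasDerivAt (fun t => radialPauli t i j) (-tangentialPauli θ i j) θ :=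
  (((Real.hasDerivAt_cos θ).smul_const (σx i j)).add
    ((Real.hasDerivAt_sin θ).smul_const (σz i j))).congr_deriv <| by
      simp only [tangentialPauli, Matrix.sub_apply, Matrix.smul_apply]
      module

theorem hasDerivAt_tangentialPauli_apply (θ : ℝ) (i j : Fin 2) :
    HasDerivAt (fun t => tangentialPauli t i j) (radialPauli θ i j) θ :=
  (((Real.hasDerivAt_sin θ).smul_const (σx i j)).sub
    ((Real.hasDerivAt_cos θ).smul_const (σz i j))).congr_deriv <| by
      simp only [radialPauli, Matrix.add_apply, Matrix.smul_apply]
      module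

theorem pderiv2_planarState (p q : ℝ → ℝ) (α θ : ℝ) :
    pderiv2 (fun α θ => planarState (p α) (q α) θ) α θ =
      (1 / 2 : ℝ) • (-q α • tangentialPauli θ + p α • radialPauli θ) := by
  ext i j
  have hτ := (hasDerivAt_tangentialPauli_apply θ i j).const_smul (p α)
  have hν := (hasDerivAt_radialPauli_apply θ i j).const_smul (q α)
  refine ((((hτ.const_add _).add hν).const_smul (1 / 2 : ℝ)).congr_deriv ?_).deriv
  simp only [Matrix.add_apply, Matrix.smul_apply]
  module

section BlochCoordinates

variable {p q : ℝ → ℝ} {α : ℝ}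

theorem pderiv1_planarState {p' q' : ℝ} (hp : HasDerivAt p p' α) (hq : HasDerivAt q q' α) (θ : ℝ) :
    pderiv1 (fun α θ => planarState (p α) (q α) θ) α θ =
      (1 / 2 : ℝ) • (p' • tangentialPauli θ + q' • radialPauli θ) := by
  ext i j
  have hτ := hp.smul_const (tangentialPauli θ i j)
  have hν := hq.smul_const (radialPauli θ i j)
  exact (((hτ.const_add _).add hν).const_smul (1 / 2 : ℝ)).deriv

theorem commute_pderiv_planarState_iff (hp : DifferentiableAt ℝ p α) (hq : DifferentiableAt ℝ q α)
    (θ : ℝ) :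
    Commute (pderiv1 (fun α θ => planarState (p α) (q α) θ) α θ)
        (pderiv2 (fun α θ => planarState (p α) (q α) θ) α θ) ↔
      deriv (fun t => p t ^ 2 + q t ^ 2) α = 0 := by
  have hlength := (hp.hasDerivAt.pow 2).add (hq.hasDerivAt.pow 2)
  have hderiv : deriv (fun t => p t ^ 2 + q t ^ 2) α = 2 * (deriv p α * p α + deriv q α * q α) :=
    (hlength.congr_deriv (by ring)).deriv
  rw [pderiv1_planarState hp.hasDerivAt hq.hasDerivAt, pderiv2_planarState,
    Commute.smul_left_iff₀ (by norm_num), Commute.smul_right_iff₀ (by norm_num),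
    commute_smul_add_smul_iff (not_commute_tangentialPauli_radialPauli θ), hderiv]
  constructor <;> intro h <;> linarith

end BlochCoordinates

section PostMeasurementState

variable {β α : ℝ}

theorem one_sub_sq_div_sq_pos (h : |β| < |α|) : 0 < 1 - β ^ 2 / α ^ 2 := by
  have hα : 0 < α ^ 2 := (sq_nonneg β).trans_lt (sq_lt_sq.2 h)
  rw [sub_pos, div_lt_one hα]
  exact sq_lt_sq.2 h

theorem deriv_sq_bloch_length (r : ℝ) (h : |β| < |α|) :
    deriv (fun t => (r * √(1 - β ^ 2 / t ^ 2)) ^ 2 + (β / t) ^ 2) α =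
      2 * (r ^ 2 - 1) * (β ^ 2 / α ^ 3) := by
  have hα : α ≠ 0 := abs_pos.1 ((abs_nonneg β).trans_lt h)
  have hlength : (fun t => (r * √(1 - β ^ 2 / t ^ 2)) ^ 2 + (β / t) ^ 2) =ᶠ[nhds α]
      fun t => r ^ 2 + (1 - r ^ 2) * β ^ 2 * (t ^ 2)⁻¹ := by
    filter_upwards [continuous_abs.continuousAt.eventually_const_lt h] with t ht
    rw [mul_pow, Real.sq_sqrt (one_sub_sq_div_sq_pos ht).le]
    ring
  have hinv := ((hasDerivAt_pow 2 α).fun_inv (pow_ne_zero 2 hα)).const_mul ((1 - r ^ 2) * β ^ 2)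
  rw [hlength.deriv_eq, (hinv.const_add (r ^ 2)).deriv]
  field_simp
  ring

theorem stmt_15_general (r : ℝ) (h : |β| < |α|) (θ : ℝ) :
    Commute (pderiv1 (fun α θ => planarState (r * √(1 - β ^ 2 / α ^ 2)) (β / α) θ) α θ)
        (pderiv2 (fun α θ => planarState (r * √(1 - β ^ 2 / α ^ 2)) (β / α) θ) α θ) ↔
      β = 0 ∨ r ^ 2 = 1 := by
  have hα : α ≠ 0 := abs_pos.1 ((abs_nonneg β).trans_lt h)
  have hq : DifferentiableAt ℝ (fun t => β / t) α := by fun_prop (disch := exact hα)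
  have hp : DifferentiableAt ℝ (fun t => r * √(1 - β ^ 2 / t ^ 2)) α := by
    have hradicand : DifferentiableAt ℝ (fun t => 1 - β ^ 2 / t ^ 2) α := by
      fun_prop (disch := positivity)
    exact (hradicand.sqrt (one_sub_sq_div_sq_pos h).ne').const_mul r
  rw [commute_pderiv_planarState_iff hp hq, deriv_sq_bloch_length r h]
  simp [hα, sub_eq_zero, or_comm]

end PostMeasurementState

theorem stmt_15 (β r : ℝ)
    (f : ℝ → ℝ → Matrix (Fin 2) (Fin 2) ℂ)
    (hf : f = fun x1 x2 => (1 / 2 : ℝ) • ((1 : Matrix (Fin 2) (Fin 2) ℂ)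
        + (r * Real.sqrt (1 - β ^ 2 / x1 ^ 2)) • (Real.sin x2 • σx - Real.cos x2 • σz)
        + (β / x1) • (Real.cos x2 • σx + Real.sin x2 • σz)))
    (x1 x2 : ℝ) (hβ : 0 < β) (hβx : β < x1)
    (D1 D2 : Matrix (Fin 2) (Fin 2) ℂ)
    (hD1 : D1 = pderiv1 f x1 x2) (hD2 : D2 = pderiv2 f x1 x2) :
    D1 * D2 = D2 * D1 ↔ r ^ 2 = 1 := by
  subst hf hD1 hD2
  have h : |β| < |x1| := by rwa [abs_of_pos hβ, abs_of_pos (hβ.trans hβx)]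
  exact (stmt_15_general r h x2).trans (or_iff_right hβ.ne')
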